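/- There is a universal constant c̃* > 0 such that the following holds. For every real 0 < α < 1, every integer d ≥ 1, and every n-vertex α-expander G (with n ≥ 2) whose maximum vertex degree is at most d, every graph H whose size is at most (n / (c̃* · (log₂ n)²)) · (α³/d⁵) is a minor of G. -/

import Mathlib

/-- Number of ordered pairs `(a,b)` with `a ∈ A`, `b ∈ B`, `a` adjacent to `b` in `G`.
For a partition `(A, Aᶜ)` this is exactly the number of edges crossing the cut. -/
noncomputable def cutCard {V : Type*} (G : SimpleGraph V) (A B : Set V) : ℕ :=
  Nat.card {p : V × V // p.1 ∈ A ∧ p.2 ∈ B ∧ G.Adj p.1 p.2}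

/-- `G` is an `α`-expander: every cut `(A, Aᶜ)` into two non-empty parts has at least
`α · min(|A|,|Aᶜ|)` crossing edges. -/
def IsExpander {V : Type*} (G : SimpleGraph V) (α : ℝ) : Prop :=
  ∀ A : Set V, A.Nonempty → Aᶜ.Nonempty →
    α * (min (Nat.card ↥A) (Nat.card ↥(Aᶜ)) : ℝ) ≤ (cutCard G A Aᶜ : ℝ)

/-- Maximum vertex degree of `G` is at most `d`. -/
def DegLE {V : Type*} (G : SimpleGraph V) (d : ℕ) : Prop :=
  ∀ v : V, Nat.card ↥{w : V | G.Adj v w} ≤ d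

/-- `H` is a minor of `G`: there are pairwise-disjoint branch sets, each inducing a
connected subgraph of `G`, with an edge of `G` between the branch sets of every
pair of adjacent vertices of `H`. -/
def IsMinor {W V : Type*} (H : SimpleGraph W) (G : SimpleGraph V) : Prop :=
  ∃ φ : W → Set V,
    (∀ u, (G.induce (φ u)).Connected) ∧
    (∀ u v, u ≠ v → Disjoint (φ u) (φ v)) ∧
    (∀ u v, H.Adj u v → ∃ a ∈ φ u, ∃ b ∈ φ v, G.Adj a b)

/-- The size of a graph: number of vertices plus number of edges. -/
noncomputable def gsize {V : Type*} (G : SimpleGraph V) : ℕ := Nat.card V + Nat.card G.edgeSet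

/-!
Embed the vertices of `H` one at a time into disjoint connected branch sets, while maintaining a
set `D` of discarded vertices which sends at most `α / 2 * |D|` edges to the vertices that are
still free. The branch sets cover so few vertices that expansion of `G` keeps every such `D` below
a quarter of the vertices. Take a stage of this process in which `D`, and then the number of
embedded vertices, is largest. No set of free vertices can be discarded, so the free part induces
an `α / 2`-expander, whose diameter is logarithmic because balls grow by a factor `1 + α / (2d)`.
No branch set can be discarded either, so each of them has a free neighbour. If a vertex `w` of `H`
were not embedded, a union of `deg w` short free paths from a common vertex to such neighbours
would be a branch set for `w`; hence all of `H` is embedded.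
-/

section

open Finset

section Interedges

variable {V V' : Type*} {G : SimpleGraph V} [DecidableRel G.Adj]

lemma cutCard_coe (A B : Finset V) : cutCard G (A : Set V) (B : Set V) = #(G.interedges A B) := by
  rw [cutCard, ← Nat.card_eq_finsetCard]
  exact Nat.card_congr (Equiv.subtypeEquivRight fun p => by
    simp only [SimpleGraph.mem_interedges_iff, mem_coe])

lemma card_interedges_union_left_le [DecidableEq V] (A B C : Finset V) :
    #(G.interedges (A ∪ B) C) ≤ #(G.interedges A C) + #(G.interedges B C) := by
  have : G.interedges (A ∪ B) C = G.interedges A C ∪ G.interedges B C := by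
    ext
    simp only [SimpleGraph.mem_interedges_iff, mem_union, or_and_right]
  exact this ▸ card_union_le _ _

lemma card_interedges_comm (A B : Finset V) :
    #(G.interedges A B) = #(G.interedges B A) :=
  haveI : Std.Symm G.Adj := ⟨fun _ _ h => h.symm⟩
  Rel.card_interedges_comm A B

lemma card_interedges_union_right_le [DecidableEq V] (A B C : Finset V) :
    #(G.interedges A (B ∪ C)) ≤ #(G.interedges A B) + #(G.interedges A C) := by
  simpa only [card_interedges_comm A] using card_interedges_union_left_le B C A

lemma card_interedges_map {G' : SimpleGraph V'} [DecidableRel G'.Adj] (f : G ↪g G')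
    (A B : Finset V) :
    #(G'.interedges (A.map f.toEmbedding) (B.map f.toEmbedding)) = #(G.interedges A B) := by
  have : G'.interedges (A.map f.toEmbedding) (B.map f.toEmbedding) =
      (G.interedges A B).map (f.toEmbedding.prodMap f.toEmbedding) := by
    ext ⟨x, y⟩
    simp only [SimpleGraph.mem_interedges_iff, mem_map, Prod.exists,
      Function.Embedding.coe_prodMap, Prod.map_apply, Prod.mk.injEq]
    constructor
    · rintro ⟨⟨a, ha, rfl⟩, ⟨b, hb, rfl⟩, hab⟩
      exact ⟨a, b, ⟨ha, hb, f.map_adj_iff.1 hab⟩, rfl, rfl⟩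
    · rintro ⟨a, b, ⟨ha, hb, hab⟩, rfl, rfl⟩
      exact ⟨⟨a, ha, rfl⟩, ⟨b, hb, rfl⟩, f.map_adj_iff.2 hab⟩
  rw [this, card_map]

lemma DegLE.degree_le [Fintype V] {d : ℕ} (hd : DegLE G d) (v : V) : G.degree v ≤ d := by
  rw [← G.card_neighborSet_eq_degree, ← Nat.card_eq_fintype_card]
  exact hd v

lemma DegLE.card_interedges_le [Finite V] {d : ℕ} (hd : DegLE G d) (A B : Finset V) :
    #(G.interedges A B) ≤ d * #A := by
  classical
  cases nonempty_fintype V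
  rw [mul_comm, SimpleGraph.interedges, Rel.interedges_eq_biUnion]
  refine card_biUnion_le_card_mul _ _ _ fun a _ => ?_
  rw [card_map]
  refine le_trans (card_le_card fun b hb => ?_) (hd.degree_le a)
  exact (G.mem_neighborFinset a b).2 (mem_filter.1 hb).2

lemma DegLE.induce {V : Type*} [Finite V] {G : SimpleGraph V} {d : ℕ} (hd : DegLE G d)
    (s : Set V) : DegLE (G.induce s) d := fun v =>
  (Nat.card_le_card_of_injective (fun w => ⟨w.1.1, w.2⟩ : _ → {w | G.Adj v w})
    fun _ _ h => by simpa [Subtype.ext_iff] using h).trans (hd v)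

end Interedges

section Expander

variable {V : Type*} [DecidableEq V] {G : SimpleGraph V} [DecidableRel G.Adj] {α : ℝ} {d : ℕ}

lemma isExpander_iff_forall_finset [Fintype V] :
    IsExpander G α ↔
      ∀ A : Finset V, 2 * #A ≤ Fintype.card V → α * #A ≤ #(G.interedges A Aᶜ) := by
  constructor
  · intro h A hA
    obtain rfl | hne := A.eq_empty_or_nonempty
    · simp
    have hcard := card_add_card_compl A
    have hAc : Aᶜ.Nonempty := card_pos.1 (by have := hne.card_pos; omega)
    have hcut := h A hne (by rwa [← coe_compl, coe_nonempty])
    rw [← coe_compl, cutCard_coe] at hcut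
    simp only [coe_sort_coe, Nat.card_eq_finsetCard] at hcut
    rwa [min_eq_left (mod_cast (by omega : #A ≤ #Aᶜ))] at hcut
  · intro h A _ _
    lift A to Finset V using A.toFinite
    have hcard := card_add_card_compl A
    rw [← coe_compl, cutCard_coe]
    simp only [coe_sort_coe, Nat.card_eq_finsetCard]
    obtain hle | hle := le_total #A #Aᶜ
    · rw [min_eq_left (mod_cast hle)]
      exact h A (by omega)
    · rw [min_eq_right (mod_cast hle), card_interedges_comm]
      simpa using h Aᶜ (by omega)

lemma isExpander_induce {U : Finset V}
    (hU : ∀ D ⊆ U, 2 * #D ≤ #U → α * #D ≤ #(G.interedges D (U \ D))) :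
    IsExpander (G.induce (U : Set V)) α := by
  rw [isExpander_iff_forall_finset]
  intro A hA
  let f := SimpleGraph.Embedding.induce (G := G) (U : Set V)
  have hcompl : Aᶜ.map f.toEmbedding = U \ A.map f.toEmbedding := by
    ext x
    by_cases hx : x ∈ U <;> simp [f, hx]
  rw [← card_interedges_map f, hcompl, ← card_map f.toEmbedding]
  refine hU _ (fun x hx => ?_) (by simpa using hA)
  obtain ⟨y, -, rfl⟩ := mem_map.1 hx
  exact y.2

lemma IsExpander.four_mul_card_le_of_sparse [Fintype V] (hG : IsExpander G α)
    (hα : 0 < α) (hd : DegLE G d) {D R : Finset V} (hR : 16 * d * #R < α * Fintype.card V)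
    (hsparse : #(G.interedges D (D ∪ R)ᶜ) ≤ α / 2 * #D) (hD : 8 * #D ≤ 5 * Fintype.card V) :
    4 * #D ≤ Fintype.card V := by
  have hcut : (#(G.interedges D Dᶜ) : ℝ) < α / 2 * #D + α / 16 * Fintype.card V := by
    have hsub : Dᶜ ⊆ (D ∪ R)ᶜ ∪ R := by grind [mem_compl]
    have hle : #(G.interedges D Dᶜ) ≤ #(G.interedges D (D ∪ R)ᶜ) + d * #R :=
      (card_le_card (SimpleGraph.interedges_mono G subset_rfl hsub)).trans
        ((card_interedges_union_right_le _ _ _).trans (Nat.add_le_add_left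
          ((card_interedges_comm D R).trans_le (hd.card_interedges_le R D)) _))
    have : (#(G.interedges D Dᶜ) : ℝ) ≤ #(G.interedges D (D ∪ R)ᶜ) + d * #R := mod_cast hle
    linarith
  -- Expansion forces a cut this sparse to be unbalanced: `8|D| < n` or `8|D| > 5n`.
  obtain hhalf | hhalf := le_total (2 * #D) (Fintype.card V)
  · have hexp := isExpander_iff_forall_finset.1 hG D hhalf
    have : α * (8 * #D) < α * Fintype.card V := by linarith
    have : 8 * #D < Fintype.card V := by exact_mod_cast (mul_lt_mul_iff_right₀ hα).1 this
    omega
  · have hcard := card_add_card_compl D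
    have hexp := isExpander_iff_forall_finset.1 hG Dᶜ (by omega)
    rw [compl_compl, card_interedges_comm] at hexp
    have hcard' : (#Dᶜ : ℝ) = Fintype.card V - #D := by rw [← hcard]; push_cast; ring
    rw [hcard'] at hexp
    have : α * (15 * Fintype.card V) < α * (24 * #D) := by linarith
    have : 15 * Fintype.card V < 24 * #D := by exact_mod_cast (mul_lt_mul_iff_right₀ hα).1 this
    omega

end Expander

section Diameter

variable {V : Type*} {G : SimpleGraph V} {α : ℝ} {d : ℕ}

lemma IsExpander.le_of_degLE (hG : IsExpander G α) (hd : DegLE G d) (hn : 2 ≤ Nat.card V) :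
    α ≤ d := by
  classical
  have : Finite V := Nat.finite_of_card_ne_zero (by omega)
  cases nonempty_fintype V
  rw [Nat.card_eq_fintype_card] at hn
  obtain ⟨v⟩ : Nonempty V := Fintype.card_pos_iff.1 (by omega)
  have h := isExpander_iff_forall_finset.1 hG {v} (by simpa using hn)
  have h' : #(G.interedges {v} {v}ᶜ) ≤ d * #{v} := hd.card_interedges_le _ _
  rw [card_singleton, mul_one] at h'
  simpa using h.trans (mod_cast h')

variable [Fintype V]

lemma IsExpander.mul_card_le_mul_card_sdiff [DecidableEq V] (hG : IsExpander G α)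
    (hd : DegLE G d) {A B : Finset V} (hA : 2 * #A ≤ Fintype.card V)
    (hAB : ∀ a ∈ A, ∀ b, G.Adj a b → b ∈ B) : α * #A ≤ d * #(B \ A) := by
  classical
  have hsub : G.interedges A Aᶜ ⊆ G.interedges A (B \ A) := by
    intro ⟨a, b⟩
    simp only [SimpleGraph.mk_mem_interedges_iff, mem_compl, mem_sdiff]
    exact fun ⟨ha, hb, hab⟩ => ⟨ha, ⟨hAB a ha b hab, hb⟩, hab⟩
  have hle : #(G.interedges A Aᶜ) ≤ d * #(B \ A) :=
    (card_le_card hsub).trans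
      ((card_interedges_comm A (B \ A)).trans_le (hd.card_interedges_le _ _))
  exact (isExpander_iff_forall_finset.1 hG A hA).trans (mod_cast hle)

lemma IsExpander.one_add_div_pow_le_card_ball (hG : IsExpander G α) (hα : 0 ≤ α)
    (hd : DegLE G d) (hd0 : 0 < d) (x : V) (k : ℕ) :
    Fintype.card V < 2 * #{y | G.edist x y ≤ k} ∨
      (1 + α / d) ^ k ≤ (#{y | G.edist x y ≤ k} : ℝ) := by
  classical
  induction k with
  | zero =>
    rw [pow_zero]
    exact Or.inr (Nat.one_le_cast.2 (card_pos.2 ⟨x, by simp⟩))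
  | succ k ih =>
    set A : Finset V := {y | G.edist x y ≤ k}
    set B : Finset V := {y | G.edist x y ≤ (k + 1 : ℕ)}
    have hAB : A ⊆ B := by
      refine monotone_filter_right _ fun y _ hy => hy.trans ?_
      exact_mod_cast k.le_succ
    have hadj : ∀ a ∈ A, ∀ b, G.Adj a b → b ∈ B := by
      intro a ha b hab
      simp only [A, B, mem_filter_univ] at ha ⊢
      push_cast
      exact G.edist_triangle.trans (add_le_add ha (SimpleGraph.edist_eq_one_iff_adj.2 hab).le)
    by_cases hA : Fintype.card V < 2 * #A
    · exact Or.inl (hA.trans_le (Nat.mul_le_mul_left 2 (card_le_card hAB)))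
    right
    have hgrow := hG.mul_card_le_mul_card_sdiff hd (not_lt.1 hA) hadj
    rw [cast_card_sdiff hAB, ← div_le_iff₀' (by positivity)] at hgrow
    calc (1 + α / d) ^ (k + 1) = (1 + α / d) * (1 + α / d) ^ k := pow_succ' _ _
      _ ≤ (1 + α / d) * #A := by gcongr; exact ih.resolve_left hA
      _ = #A + α * #A / d := by ring
      _ ≤ #B := by linarith

lemma IsExpander.ediam_le (hG : IsExpander G α) (hα : 0 ≤ α) (hd : DegLE G d) (hd0 : 0 < d)
    {r : ℕ} (hr : Fintype.card V ≤ (1 + α / d) ^ r) : G.ediam ≤ (2 * r : ℕ) := by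
  classical
  have hball (x : V) : Fintype.card V < 2 * #{y | G.edist x y ≤ r} := by
    refine (hG.one_add_div_pow_le_card_ball hα hd hd0 x r).elim id fun h => ?_
    have hle : Fintype.card V ≤ #{y | G.edist x y ≤ r} := mod_cast hr.trans h
    have := Fintype.card_pos_iff.2 ⟨x⟩
    omega
  refine SimpleGraph.ediam_le_of_edist_le fun x y => ?_
  obtain ⟨z, hz⟩ := inter_nonempty_of_card_lt_card_add_card (subset_univ {z | G.edist x z ≤ r})
    (subset_univ {z | G.edist y z ≤ r}) (by
      have hx := hball x
      have hy := hball y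
      rw [card_univ]
      omega)
  simp only [mem_inter, mem_filter_univ] at hz
  calc G.edist x y ≤ G.edist x z + G.edist z y := G.edist_triangle
    _ ≤ r + r := add_le_add hz.1 (G.edist_comm ▸ hz.2)
    _ = (2 * r : ℕ) := by push_cast; ring

end Diameter

section Connectivity

variable {V V' : Type*} {G : SimpleGraph V} {G' : SimpleGraph V'} {ℓ : ℕ}

lemma connected_induce_image {s : Set V} (f : G →g G') (hs : (G.induce s).Connected) :
    (G'.induce (f '' s)).Connected :=
  hs.map (SimpleGraph.induceHom f (Set.mapsTo_image f s))
    (Set.surjective_mapsTo_image_restrict f s)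

lemma exists_connected_finset_of_ediam_le (hG : G.ediam ≤ ℓ) (x : V) (T : Finset V) :
    ∃ P : Finset V, x ∈ P ∧ T ⊆ P ∧ (G.induce (P : Set V)).Connected ∧ #P ≤ #T * ℓ + 1 := by
  classical
  induction T using Finset.induction_on with
  | empty =>
    refine ⟨{x}, mem_singleton_self x, empty_subset _, ?_, by simp⟩
    rw [coe_singleton]
    exact SimpleGraph.Connected.of_subsingleton
  | insert y T hy ih =>
    obtain ⟨P, hxP, hTP, hP, hcard⟩ := ih
    have hxy : G.edist x y ≤ ℓ := SimpleGraph.edist_le_ediam.trans hG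
    obtain ⟨p, hp⟩ :=
      SimpleGraph.exists_walk_of_edist_ne_top (hxy.trans_lt (ENat.natCast_lt_top ℓ)).ne
    have hlen : p.length ≤ ℓ := by exact_mod_cast hp.trans_le hxy
    refine ⟨P ∪ p.support.toFinset, mem_union_left _ hxP, ?_, ?_, ?_⟩
    · exact insert_subset (mem_union_right _ (by simp)) (hTP.trans subset_union_left)
    · rw [coe_union, List.coe_toFinset]
      exact SimpleGraph.induce_union_connected hP.preconnected
        p.connected_induce_support.preconnected ⟨x, hxP, p.start_mem_support⟩
    · have hinter : 0 < #(P ∩ p.support.toFinset) := card_pos.2 ⟨x, by simp [hxP]⟩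
      have hsupp := p.support.toFinset_card_le
      have hunion := card_union_add_card_inter P p.support.toFinset
      rw [p.length_support] at hsupp
      rw [card_insert_of_notMem hy, add_mul]
      omega

lemma exists_connected_subset_of_ediam_induce_le {U T : Finset V}
    (hU : (G.induce (U : Set V)).ediam ≤ ℓ) (hne : U.Nonempty) (hT : T ⊆ U) :
    ∃ P ⊆ U, T ⊆ P ∧ (G.induce (P : Set V)).Connected ∧ #P ≤ #T * ℓ + 1 := by
  classical
  obtain ⟨x, hx⟩ := hne
  obtain ⟨P, -, hTP, hP, hcard⟩ :=
    exists_connected_finset_of_ediam_le hU ⟨x, hx⟩ (T.subtype (· ∈ (U : Set V)))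
  have hTU : #(T.subtype (· ∈ (U : Set V))) = #T := by
    rw [card_subtype, filter_true_of_mem fun _ hy => mem_coe.2 (hT hy)]
  refine ⟨P.map (.subtype _), fun y hy => ?_, fun y hy => ?_, ?_, by rwa [card_map, ← hTU]⟩
  · exact property_of_mem_map_subtype P hy
  · exact mem_map_of_mem _ (hTP (mem_subtype.2 hy : ⟨y, hT hy⟩ ∈ _))
  · rw [coe_map]
    exact connected_induce_image (SimpleGraph.Embedding.induce _).toHom hP

end Connectivity

section PartialModel

variable {V W : Type*} {G : SimpleGraph V} {H : SimpleGraph W} {S T : Finset W}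
  {φ : W → Finset V}

/-- The branch sets `φ u` with `u ∈ S` form a minor model in `G` of the subgraph of `H` induced
by `S`; the values of `φ` outside `S` are irrelevant. -/
structure IsPartialModel (H : SimpleGraph W) (G : SimpleGraph V) (S : Finset W)
    (φ : W → Finset V) : Prop where
  connected : ∀ u ∈ S, (G.induce (φ u : Set V)).Connected
  pairwiseDisjoint : (S : Set W).PairwiseDisjoint φ
  exists_adj : ∀ u ∈ S, ∀ v ∈ S, H.Adj u v → ∃ a ∈ φ u, ∃ b ∈ φ v, G.Adj a b

namespace IsPartialModel

lemma empty (φ : W → Finset V) : IsPartialModel H G ∅ φ where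
  connected := by simp
  pairwiseDisjoint := by simp
  exists_adj := by simp

lemma isMinor [Fintype W] (h : IsPartialModel H G univ φ) : IsMinor H G :=
  ⟨fun u => φ u, fun u => h.connected u (mem_univ u),
    fun u v huv => disjoint_coe.2 (h.pairwiseDisjoint (by simp) (by simp) huv),
    fun u v => h.exists_adj u (mem_univ u) v (mem_univ v)⟩

lemma mono (h : IsPartialModel H G S φ) (hTS : T ⊆ S) : IsPartialModel H G T φ where
  connected u hu := h.connected u (hTS hu)
  pairwiseDisjoint := h.pairwiseDisjoint.subset (coe_subset.2 hTS)
  exists_adj u hu v hv := h.exists_adj u (hTS hu) v (hTS hv)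

lemma nonempty (h : IsPartialModel H G S φ) {u : W} (hu : u ∈ S) : (φ u).Nonempty :=
  (h.connected u hu).nonempty.elim fun x => ⟨x, x.2⟩

lemma insert_update [DecidableEq V] [DecidableEq W] (h : IsPartialModel H G S φ) {w : W}
    (hw : w ∉ S) {P : Finset V} (hP : (G.induce (P : Set V)).Connected)
    (hdisj : Disjoint P (S.biUnion φ))
    (hadj : ∀ u ∈ S, H.Adj w u → ∃ a ∈ P, ∃ b ∈ φ u, G.Adj a b) :
    IsPartialModel H G (insert w S) (Function.update φ w P) := by
  have hφ : ∀ u ∈ S, Function.update φ w P u = φ u := fun u hu =>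
    Function.update_of_ne (ne_of_mem_of_not_mem hu hw) _ _
  rw [disjoint_biUnion_right] at hdisj
  refine ⟨?connected, ?disjoint, ?adj⟩
  case connected =>
    rw [forall_mem_insert, Function.update_self]
    exact ⟨hP, fun u hu => (hφ u hu).symm ▸ h.connected u hu⟩
  case disjoint =>
    rw [coe_insert, Set.pairwiseDisjoint_insert_of_notMem hw, Function.update_self]
    refine ⟨fun u hu v hv huv => ?_, fun u hu => (hφ u hu).symm ▸ hdisj u hu⟩
    simpa only [Function.onFun, hφ u hu, hφ v hv] using h.pairwiseDisjoint hu hv huv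
  case adj =>
    intro u hu v hv huv
    obtain rfl | huS := mem_insert.1 hu <;> obtain rfl | hvS := mem_insert.1 hv
    · exact (H.irrefl huv).elim
    · rw [Function.update_self, hφ v hvS]
      exact hadj v hvS huv
    · rw [Function.update_self, hφ u huS]
      obtain ⟨a, ha, b, hb, hab⟩ := hadj u huS huv.symm
      exact ⟨b, hb, a, ha, hab.symm⟩
    · rw [hφ u huS, hφ v hvS]
      exact h.exists_adj u huS v hvS huv

end IsPartialModel

lemma biUnion_insert_update [DecidableEq V] [DecidableEq W] {w : W} (hw : w ∉ S)
    (P : Finset V) : (insert w S).biUnion (Function.update φ w P) = P ∪ S.biUnion φ := by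
  rw [biUnion_insert, Function.update_self, biUnion_congr rfl fun u hu =>
    Function.update_of_ne (ne_of_mem_of_not_mem hu hw) P φ]

end PartialModel

section Greedy

variable {V W : Type*} [Fintype V] [DecidableEq V] [Fintype W] {G : SimpleGraph V}
  [DecidableRel G.Adj] {H : SimpleGraph W} [DecidableRel H.Adj] {α : ℝ} {d ℓ : ℕ}
  {D : Finset V} {S : Finset W} {φ : W → Finset V}

/-- A stage of the greedy embedding of `H` into `G`: the vertices in `S` are embedded, those in
`D` are discarded, and `(D ∪ S.biUnion φ)ᶜ` is the set of free vertices. -/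
structure IsGreedyState (G : SimpleGraph V) [DecidableRel G.Adj] (H : SimpleGraph W)
    [DecidableRel H.Adj] (α : ℝ) (ℓ : ℕ) (D : Finset V) (S : Finset W) (φ : W → Finset V) :
    Prop extends IsPartialModel H G S φ where
  disjoint_discarded : Disjoint D (S.biUnion φ)
  card_branch_le : ∀ u ∈ S, #(φ u) ≤ H.degree u * ℓ + 1
  sparse : #(G.interedges D (D ∪ S.biUnion φ)ᶜ) ≤ α / 2 * #D
  four_mul_card_le : 4 * #D ≤ Fintype.card V

namespace IsGreedyState

lemma empty (φ : W → Finset V) : IsGreedyState G H α ℓ ∅ ∅ φ where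
  toIsPartialModel := .empty φ
  disjoint_discarded := disjoint_empty_left _
  card_branch_le := by simp
  sparse := by simp
  four_mul_card_le := by simp

lemma card_biUnion_le (h : IsGreedyState G H α ℓ D S φ) :
    #(S.biUnion φ) ≤ gsize H * (2 * ℓ + 1) := by
  calc #(S.biUnion φ) ≤ ∑ u ∈ S, #(φ u) := Finset.card_biUnion_le
    _ ≤ ∑ u ∈ S, (H.degree u * ℓ + 1) := sum_le_sum h.card_branch_le
    _ ≤ ∑ u, (H.degree u * ℓ + 1) := sum_le_univ_sum_of_nonneg fun _ => Nat.zero_le _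
    _ = 2 * #H.edgeFinset * ℓ + Fintype.card W := by
      rw [sum_add_distrib, ← sum_mul, H.sum_degrees_eq_twice_card_edges, sum_const, card_univ,
        smul_eq_mul, mul_one]
    _ ≤ gsize H * (2 * ℓ + 1) := by
      rw [gsize, Nat.card_eq_fintype_card, Nat.card_eq_fintype_card, ← H.edgeFinset_card]
      nlinarith [Nat.zero_le (Fintype.card W * ℓ)]

lemma mul_card_biUnion_lt (h : IsGreedyState G H α ℓ D S φ)
    (hB : 16 * d * (gsize H * (2 * ℓ + 1)) < α * Fintype.card V) :
    16 * d * #(S.biUnion φ) < α * Fintype.card V := by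
  have : (#(S.biUnion φ) : ℝ) ≤ gsize H * (2 * ℓ + 1) := mod_cast h.card_biUnion_le
  exact lt_of_le_of_lt (by gcongr) hB

lemma sixteen_mul_card_biUnion_lt (h : IsGreedyState G H α ℓ D S φ) (hαd : α ≤ d)
    (hB : 16 * d * (gsize H * (2 * ℓ + 1)) < α * Fintype.card V) :
    16 * #(S.biUnion φ) < Fintype.card V := by
  have hlt : (d : ℝ) * (16 * #(S.biUnion φ)) < d * Fintype.card V := by
    calc (d : ℝ) * (16 * #(S.biUnion φ)) = 16 * d * #(S.biUnion φ) := by ring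
      _ < α * Fintype.card V := h.mul_card_biUnion_lt hB
      _ ≤ d * Fintype.card V := by gcongr
  exact_mod_cast lt_of_mul_lt_mul_left hlt d.cast_nonneg

lemma nonempty_free (h : IsGreedyState G H α ℓ D S φ) (hαd : α ≤ d)
    (hB : 16 * d * (gsize H * (2 * ℓ + 1)) < α * Fintype.card V) :
    (D ∪ S.biUnion φ)ᶜ.Nonempty := by
  have hunion := card_union_le D (S.biUnion φ)
  have hcard := card_add_card_compl (D ∪ S.biUnion φ)
  have hR := h.sixteen_mul_card_biUnion_lt hαd hB
  have hD := h.four_mul_card_le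
  exact card_pos.1 (by omega)

-- Applied either to a set `D'` of free vertices, with `T = S`, or to a branch set `D' = φ u`,
-- with `T = S.erase u`.
lemma discard (h : IsGreedyState G H α ℓ D S φ) (hG : IsExpander G α) (hα : 0 < α)
    (hd : DegLE G d) (hB : 16 * d * (gsize H * (2 * ℓ + 1)) < α * Fintype.card V)
    {D' : Finset V} {T : Finset W} (hTS : T ⊆ S) (hDD' : Disjoint D D')
    (hD'T : Disjoint D' (T.biUnion φ)) (hST : S.biUnion φ ⊆ D' ∪ T.biUnion φ)
    (hsparse : #(G.interedges D' (D ∪ D' ∪ T.biUnion φ)ᶜ) ≤ α / 2 * #D')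
    (hcard : 8 * (#D + #D') ≤ 5 * Fintype.card V) :
    IsGreedyState G H α ℓ (D ∪ D') T φ := by
  have hTS' : T.biUnion φ ⊆ S.biUnion φ := biUnion_subset_biUnion_of_subset_left φ hTS
  have hDcard : #(D ∪ D') = #D + #D' := card_union_of_disjoint hDD'
  have hsparse' : #(G.interedges (D ∪ D') (D ∪ D' ∪ T.biUnion φ)ᶜ) ≤ α / 2 * #(D ∪ D') := by
    have hsub : (D ∪ D' ∪ T.biUnion φ)ᶜ ⊆ (D ∪ S.biUnion φ)ᶜ := by
      rw [compl_subset_compl, union_assoc]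
      exact union_subset_union_right hST
    have hle : #(G.interedges (D ∪ D') (D ∪ D' ∪ T.biUnion φ)ᶜ) ≤
        #(G.interedges D (D ∪ S.biUnion φ)ᶜ) + #(G.interedges D' (D ∪ D' ∪ T.biUnion φ)ᶜ) :=
      (card_interedges_union_left_le _ _ _).trans (Nat.add_le_add_right
        (card_le_card (SimpleGraph.interedges_mono G subset_rfl hsub)) _)
    have : (#(G.interedges (D ∪ D') (D ∪ D' ∪ T.biUnion φ)ᶜ) : ℝ) ≤
        #(G.interedges D (D ∪ S.biUnion φ)ᶜ) + #(G.interedges D' (D ∪ D' ∪ T.biUnion φ)ᶜ) :=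
      mod_cast hle
    have hDsparse := h.sparse
    rw [hDcard]
    push_cast
    linarith
  have hTB : 16 * d * #(T.biUnion φ) < α * Fintype.card V := by
    refine lt_of_le_of_lt ?_ (h.mul_card_biUnion_lt hB)
    gcongr
  exact
    { toIsPartialModel := h.mono hTS
      disjoint_discarded := disjoint_union_left.2 ⟨h.disjoint_discarded.mono_right hTS', hD'T⟩
      card_branch_le := fun u hu => h.card_branch_le u (hTS hu)
      sparse := hsparse'
      four_mul_card_le := hG.four_mul_card_le_of_sparse hα hd hTB hsparse' (by omega) }

lemma isExpander_induce_free (h : IsGreedyState G H α ℓ D S φ)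
    (hmax : ∀ D' S' φ', IsGreedyState G H α ℓ D' S' φ' → #D' ≤ #D)
    (hG : IsExpander G α) (hα : 0 < α) (hd : DegLE G d)
    (hB : 16 * d * (gsize H * (2 * ℓ + 1)) < α * Fintype.card V) :
    IsExpander (G.induce ((D ∪ S.biUnion φ)ᶜ : Finset V)) (α / 2) := by
  refine isExpander_induce fun D' hD' hhalf => ?_
  by_contra! hsparse
  have hdisj : Disjoint (D ∪ S.biUnion φ) D' := (subset_compl_iff_disjoint_left).1 hD'
  rw [disjoint_union_left] at hdisj
  have hne : 0 < #D' := by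
    refine card_pos.2 (nonempty_iff_ne_empty.2 ?_)
    rintro rfl
    simp at hsparse
  have hfree : (D ∪ D' ∪ S.biUnion φ)ᶜ = (D ∪ S.biUnion φ)ᶜ \ D' := by
    rw [union_right_comm, compl_union, sdiff_eq_inter_compl]
  have hcard := card_add_card_compl (D ∪ S.biUnion φ)
  have hDcard : #D ≤ #(D ∪ S.biUnion φ) := card_le_card subset_union_left
  have hD := h.four_mul_card_le
  have hlarger := hmax _ _ _ <| h.discard hG hα hd hB subset_rfl hdisj.1 hdisj.2.symm
    subset_union_right (hfree ▸ hsparse.le) (by omega)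
  rw [card_union_of_disjoint hdisj.1] at hlarger
  omega

lemma exists_adj_free (h : IsGreedyState G H α ℓ D S φ)
    (hmax : ∀ D' S' φ', IsGreedyState G H α ℓ D' S' φ' → #D' ≤ #D)
    (hG : IsExpander G α) (hα : 0 < α) (hd : DegLE G d) (hαd : α ≤ d)
    (hB : 16 * d * (gsize H * (2 * ℓ + 1)) < α * Fintype.card V) {u : W} (hu : u ∈ S) :
    ∃ a ∈ φ u, ∃ b ∈ (D ∪ S.biUnion φ)ᶜ, G.Adj a b := by
  classical
  by_contra! hnone
  have hunion : φ u ∪ (S.erase u).biUnion φ = S.biUnion φ := by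
    rw [← biUnion_insert, insert_erase hu]
  have hsub : φ u ⊆ S.biUnion φ := subset_biUnion_of_mem φ hu
  have hDu : Disjoint D (φ u) := h.disjoint_discarded.mono_right hsub
  have hdisj : Disjoint (φ u) ((S.erase u).biUnion φ) := by
    refine (disjoint_biUnion_right _ _ _).2 fun v hv => ?_
    exact h.pairwiseDisjoint hu (mem_of_mem_erase hv) (ne_of_mem_erase hv).symm
  have hedges : G.interedges (φ u) (D ∪ φ u ∪ (S.erase u).biUnion φ)ᶜ = ∅ := by
    rw [union_assoc, hunion, eq_empty_iff_forall_notMem]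
    rintro ⟨a, b⟩ hab
    rw [SimpleGraph.mk_mem_interedges_iff] at hab
    exact hnone a hab.1 b hab.2.1 hab.2.2
  have hR := h.sixteen_mul_card_biUnion_lt hαd hB
  have hucard := card_le_card hsub
  have hD := h.four_mul_card_le
  have hlarger := hmax _ _ _ <| h.discard hG hα hd hB (erase_subset u S) hDu hdisj hunion.ge
    (by rw [hedges, card_empty, Nat.cast_zero]; positivity) (by omega)
  have hpos := (h.nonempty hu).card_pos
  rw [card_union_of_disjoint hDu] at hlarger
  omega

lemma exists_insert [DecidableEq W] (h : IsGreedyState G H α ℓ D S φ)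
    (hdiam : (G.induce ((D ∪ S.biUnion φ)ᶜ : Finset V)).ediam ≤ ℓ)
    (hne : (D ∪ S.biUnion φ)ᶜ.Nonempty)
    (hadj : ∀ u ∈ S, ∃ a ∈ φ u, ∃ b ∈ (D ∪ S.biUnion φ)ᶜ, G.Adj a b) {w : W} (hw : w ∉ S) :
    ∃ ψ, IsGreedyState G H α ℓ D (insert w S) ψ := by
  have : Nonempty V := ⟨hne.choose⟩
  choose! a ha f hf haf using hadj
  obtain ⟨P, hPfree, hfP, hP, hPcard⟩ := exists_connected_subset_of_ediam_induce_le
    (T := {u ∈ S | H.Adj w u}.image f) hdiam hne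
    (image_subset_iff.2 fun u hu => hf u (mem_filter.1 hu).1)
  have hdeg : #({u ∈ S | H.Adj w u}.image f) ≤ H.degree w := by
    refine card_image_le.trans (card_le_card fun u hu => ?_)
    exact (H.mem_neighborFinset w u).2 (mem_filter.1 hu).2
  have hdisj : Disjoint (D ∪ S.biUnion φ) P := subset_compl_iff_disjoint_left.1 hPfree
  rw [disjoint_union_left] at hdisj
  refine ⟨Function.update φ w P, ?_⟩
  exact
    { toIsPartialModel := h.insert_update hw hP hdisj.2.symm fun u hu hwu =>
        ⟨f u, hfP (mem_image_of_mem f (mem_filter.2 ⟨hu, hwu⟩)), a u, ha u hu, (haf u hu).symm⟩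
      disjoint_discarded := by
        rw [biUnion_insert_update hw, disjoint_union_right]
        exact ⟨hdisj.1, h.disjoint_discarded⟩
      card_branch_le := by
        rw [forall_mem_insert, Function.update_self]
        refine ⟨hPcard.trans (by gcongr), fun u hu => ?_⟩
        rw [Function.update_of_ne (ne_of_mem_of_not_mem hu hw)]
        exact h.card_branch_le u hu
      sparse := by
        have hsub : (D ∪ (P ∪ S.biUnion φ))ᶜ ⊆ (D ∪ S.biUnion φ)ᶜ :=
          compl_subset_compl.2 (union_subset_union_right subset_union_right)
        rw [biUnion_insert_update hw]
        exact le_trans (mod_cast card_le_card (G.interedges_mono subset_rfl hsub)) h.sparse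
      four_mul_card_le := h.four_mul_card_le }

end IsGreedyState

lemma exists_maximal_isGreedyState (G : SimpleGraph V) [DecidableRel G.Adj] (H : SimpleGraph W)
    [DecidableRel H.Adj] (α : ℝ) (ℓ : ℕ) :
    ∃ D S φ, IsGreedyState G H α ℓ D S φ ∧
      (∀ D' S' φ', IsGreedyState G H α ℓ D' S' φ' → #D' ≤ #D) ∧
      ∀ S' φ', IsGreedyState G H α ℓ D S' φ' → #S' ≤ #S := by
  obtain ⟨⟨D, S, φ⟩, h, hmax⟩ := Set.exists_max_image
    {s : Finset V × Finset W × (W → Finset V) | IsGreedyState G H α ℓ s.1 s.2.1 s.2.2}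
    (fun s => toLex (#s.1, #s.2.1)) (Set.toFinite _) ⟨(∅, ∅, fun _ => ∅), .empty _⟩
  simp only [Set.mem_ofPred_eq, Prod.forall, Prod.Lex.toLex_le_toLex] at h hmax
  refine ⟨D, S, φ, h, fun D' S' φ' h' => ?_, fun S' φ' h' => ?_⟩
  · exact (hmax D' S' φ' h').elim le_of_lt fun heq => heq.1.le
  · exact (hmax D S' φ' h').elim (fun hlt => (hlt.ne rfl).elim) And.right

end Greedy

theorem IsExpander.isMinor_of_forall_ediam_le {V W : Type*} [Fintype V] [Finite W]
    {G : SimpleGraph V} {H : SimpleGraph W} {α : ℝ} {d ℓ : ℕ} (hG : IsExpander G α) (hα : 0 < α)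
    (hd : DegLE G d) (hαd : α ≤ d)
    (hdiam : ∀ U : Finset V, IsExpander (G.induce (U : Set V)) (α / 2) →
      (G.induce (U : Set V)).ediam ≤ ℓ)
    (hB : 16 * d * (gsize H * (2 * ℓ + 1)) < α * Fintype.card V) : IsMinor H G := by
  classical
  cases nonempty_fintype W
  obtain ⟨D, S, φ, h, hmaxD, hmaxS⟩ := exists_maximal_isGreedyState G H α ℓ
  suffices hS : S = univ by
    subst hS
    exact h.isMinor
  by_contra hS
  obtain ⟨w, hw⟩ : ∃ w, w ∉ S := by simpa [eq_univ_iff_forall] using hS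
  obtain ⟨ψ, hψ⟩ := h.exists_insert (hdiam _ (h.isExpander_induce_free hmaxD hG hα hd hB))
    (h.nonempty_free hαd hB) (fun _ => h.exists_adj_free hmaxD hG hα hd hαd hB) hw
  have hlarger := hmaxS _ _ hψ
  rw [card_insert_of_notMem hw] at hlarger
  omega

section Bounds

lemma one_le_logb_two {x : ℝ} (hx : 2 ≤ x) : 1 ≤ Real.logb 2 x := by
  rwa [Real.le_logb_iff_rpow_le one_lt_two (two_pos.trans_le hx), Real.rpow_one]

lemma le_one_add_pow_ceil {γ x : ℝ} (hγ : 0 < γ) (hγ1 : γ ≤ 1) (hx : 1 ≤ x) :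
    x ≤ (1 + γ) ^ ⌈Real.logb 2 x / γ⌉₊ := by
  have htwo : (2 : ℝ) ≤ (1 + γ) ^ (1 / γ) := by
    have := one_add_mul_self_le_rpow_one_add (s := γ) (by linarith) ((one_le_div hγ).2 hγ1)
    rwa [one_div_mul_cancel hγ.ne', one_add_one_eq_two] at this
  calc x = 2 ^ Real.logb 2 x :=
        (Real.rpow_logb two_pos one_lt_two.ne' (one_pos.trans_le hx)).symm
    _ ≤ ((1 + γ) ^ (1 / γ)) ^ Real.logb 2 x :=
        Real.rpow_le_rpow zero_le_two htwo (Real.logb_nonneg one_lt_two hx)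
    _ = (1 + γ) ^ (Real.logb 2 x / γ) := by
        rw [← Real.rpow_mul (by positivity), one_div_mul_eq_div]
    _ ≤ (1 + γ) ^ (⌈Real.logb 2 x / γ⌉₊ : ℝ) :=
        Real.rpow_le_rpow_of_exponent_le (by linarith) (Nat.le_ceil _)
    _ = (1 + γ) ^ ⌈Real.logb 2 x / γ⌉₊ := Real.rpow_natCast _ _

lemma four_mul_ceil_add_one_le {x y α : ℝ} (hα : 0 < α) (hαy : α ≤ y) (hx : 1 ≤ x) :
    4 * (⌈x / (α / 2 / y)⌉₊ : ℝ) + 1 ≤ 13 * (y * x / α) := by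
  have hy : 0 < y := hα.trans_le hαy
  have hone : 1 ≤ y * x / α := (one_le_div hα).2 (hαy.trans (le_mul_of_one_le_right hy.le hx))
  have heq : x / (α / 2 / y) = 2 * (y * x / α) := by field_simp
  have hceil := (Nat.ceil_lt_add_one (a := 2 * (y * x / α)) (by positivity)).le
  rw [heq]
  linarith

lemma div_mul_cube_div_pow_five_le {n l α y : ℝ} (hn : 0 ≤ n) (hα : 0 < α) (hαy : α ≤ y)
    (hy : 1 ≤ y) (hl : 1 ≤ l) :
    n / (256 * l ^ 2) * (α ^ 3 / y ^ 5) ≤ n / (256 * l) * (α / y) ^ 2 := by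
  have heq : n / (256 * l ^ 2) * (α ^ 3 / y ^ 5) =
      n / (256 * l) * (α / y) ^ 2 * (α / (l * y ^ 3)) := by field_simp
  have hratio : α / (l * y ^ 3) ≤ 1 := by
    refine div_le_one_of_le₀ ?_ (by positivity)
    calc α ≤ y ^ 3 := hαy.trans (le_self_pow₀ hy three_ne_zero)
      _ ≤ l * y ^ 3 := le_mul_of_one_le_left (by positivity) hl
  rw [heq]
  exact mul_le_of_le_one_right (by positivity) hratio

end Bounds

theorem large_minors_in_expanders_simple_general {V W : Type*} [Finite W] {G : SimpleGraph V}
    {H : SimpleGraph W} {α : ℝ} {d : ℕ} (hα : 0 < α) (hn : 2 ≤ Nat.card V)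
    (hG : IsExpander G α) (hd : DegLE G d)
    (hH : gsize H ≤ Nat.card V / (256 * Real.logb 2 (Nat.card V)) * (α / d) ^ 2) :
    IsMinor H G := by
  classical
  have : Finite V := Nat.finite_of_card_ne_zero (by omega)
  cases nonempty_fintype V
  have hαd : α ≤ d := hG.le_of_degLE hd hn
  rw [Nat.card_eq_fintype_card] at hn hH
  have hd0 : (0 : ℝ) < d := hα.trans_le hαd
  have hn2 : (2 : ℝ) ≤ Fintype.card V := mod_cast hn
  set l := Real.logb 2 (Fintype.card V)
  have hl : 1 ≤ l := one_le_logb_two hn2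
  set r := ⌈l / (α / 2 / d)⌉₊
  have hr : 4 * (r : ℝ) + 1 ≤ 13 * (d * l / α) := four_mul_ceil_add_one_le hα hαd hl
  refine hG.isMinor_of_forall_ediam_le (ℓ := 2 * r) hα hd hαd (fun U hU => ?_) ?_
  · refine hU.ediam_le (half_pos hα).le (hd.induce _) (mod_cast hd0) ?_
    calc (Fintype.card (U : Set V) : ℝ) ≤ Fintype.card V := mod_cast set_fintype_card_le_univ _
      _ ≤ (1 + α / 2 / d) ^ r :=
        le_one_add_pow_ceil (by positivity) ((div_le_one hd0).2 (by linarith)) (by linarith)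
  · calc 16 * d * (gsize H * (2 * (2 * r : ℕ) + 1)) = 16 * d * (gsize H * (4 * r + 1) : ℝ) := by
          push_cast; ring
      _ ≤ 16 * d * (Fintype.card V / (256 * l) * (α / d) ^ 2 * (13 * (d * l / α))) := by gcongr
      _ = 208 / 256 * (α * Fintype.card V) := by field_simp; ring
      _ < α * Fintype.card V := by linarith [show 0 < α * (Fintype.card V : ℝ) by positivity]

end

/-- There is a universal constant `c̃* > 0` such that for every real `0 < α < 1`, every
integer `d ≥ 1`, and every `n`-vertex `α`-expander `G` (`n ≥ 2`) whose maximum vertex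
degree is at most `d`, every graph `H` whose size is at most
`(n / (c̃* · (log₂ n)²)) · (α³/d⁵)` is a minor of `G`. -/
theorem large_minors_in_expanders_simple :
    ∃ c : ℝ, 0 < c ∧
      ∀ (V : Type) [Fintype V] (G : SimpleGraph V) (α : ℝ) (d : ℕ),
        0 < α → α < 1 → 1 ≤ d →
        2 ≤ Nat.card V →
        IsExpander G α → DegLE G d →
        ∀ (W : Type) [Fintype W] (H : SimpleGraph W),
          (gsize H : ℝ) ≤
            (Nat.card V : ℝ) / (c * (Real.logb 2 (Nat.card V)) ^ 2) * (α ^ 3 / d ^ 5) →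
          IsMinor H G := by
  refine ⟨256, by norm_num, ?_⟩
  intro V _ G α d hα _ hd1 hn hG hd W _ H hH
  refine large_minors_in_expanders_simple_general hα hn hG hd (hH.trans ?_)
  exact div_mul_cube_div_pow_five_le (Nat.cast_nonneg _) hα (hG.le_of_degLE hd hn)
    (mod_cast hd1) (one_le_logb_two (mod_cast hn))
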